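/- arXiv:2209.15130 — 3 statements merged into one kernel-verified Lean document; each statement's English description precedes it below -/
import Mathlib

section
/- Let 1 ≤ r ≤ p, Y ∈ ℝ^{p×r}_* and 0 < x ≤ σ_r(Y)/3. Let Y₁, Y₂ ∈ ℝ^{p×r}_* satisfy d(Y₁,Y) < x and d(Y₂,Y) < x, and let Q ∈ O(r) be any minimizer of O ↦ ‖Y₂O − Y₁‖_F over O ∈ O(r). Then for every t ∈ [0,1] the matrix Y₁ + t(Y₂Q − Y₁) has full column rank r and d(Y₁ + t(Y₂Q − Y₁), Y) < x. (Interpretation: the geodesic ball of radius x ≤ σ_r(Y)/3 centered at [Y] in the quotient manifold M is geodesically convex, since t ↦ [Y₁ + t(Y₂Q − Y₁)] is the minimizing geodesic joining [Y₁] and [Y₂].) -/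
open Matrix

/-- Trace inner product `⟨A,B⟩ = tr(AᵀB)`. -/
noncomputable def trInner {m n : ℕ} (A B : Matrix (Fin m) (Fin n) ℝ) : ℝ :=
  ∑ i, ∑ j, A i j * B i j

/-- Frobenius norm. -/
noncomputable def frob {m n : ℕ} (A : Matrix (Fin m) (Fin n) ℝ) : ℝ :=
  Real.sqrt (∑ i, ∑ j, (A i j) ^ 2)

open scoped Classical in
/-- The `i`-th largest eigenvalue (1-indexed, `1 ≤ i ≤ n`) of a Hermitian matrix; junk value 0
otherwise. -/
noncomputable def eigVal {n : ℕ} (A : Matrix (Fin n) (Fin n) ℝ) (i : ℕ) : ℝ :=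
  if hA : A.IsHermitian then
    if h : n - i < n then hA.eigenvalues (Tuple.sort hA.eigenvalues ⟨n - i, h⟩) else 0
  else 0

/-- The `i`-th largest singular value (1-indexed) of `Y`, so `sval Y 1 = ‖Y‖` (spectral norm)
and `sval Y r` is the least singular value. -/
noncomputable def sval {p r : ℕ} (Y : Matrix (Fin p) (Fin r) ℝ) (i : ℕ) : ℝ :=
  Real.sqrt (eigVal (Yᵀ * Y) i)

/-- `Q` is an orthogonal matrix. -/
def IsOrtho {r : ℕ} (Q : Matrix (Fin r) (Fin r) ℝ) : Prop := Qᵀ * Q = 1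

/-- The quotient distance `d(Y₁,Y₂) = min_{Q ∈ O(r)} ‖Y₂Q − Y₁‖_F`. -/
noncomputable def dOrth {p r : ℕ} (Y₁ Y₂ : Matrix (Fin p) (Fin r) ℝ) : ℝ :=
  sInf {c | ∃ Q : Matrix (Fin r) (Fin r) ℝ, IsOrtho Q ∧ c = frob (Y₂ * Q - Y₁)}

/-!
Put `D = Y₂ Q - Y₁`, `γ t = Y₁ + t D` and `σ = σ_r(Y)`. Optimality of `Q` makes `γ(t)ᵀ D` symmetric
for every `t`. Fix `t`, align `Y` with `Z = γ t`, so that `Yᵀ Z` is symmetric as well, and set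
`E = Y - Z`. For orthogonal `R`, the difference `‖Y R - C‖² - ‖Y - C‖²` with `C = Z + u D` is the
sum of a term quadratic in `1 - R`, at least `σ (σ - ‖Y - C‖) ‖1 - R‖²`, and the term
`u ⟪E K, D⟫`, where `K = Rᵀ - R`. As `K` is skew, `‖E K‖² ≤ ‖E‖² ‖K‖² / 2`, so completing the square
in `E K + 2 u D` bounds `d(γ(t + u), Y)²` below by `‖E‖² - 2 u ⟪E, D⟫` for small `u` as soon as
`‖E‖² < 2 σ (σ - ‖E‖)`, that is, `‖E‖ < (√3 - 1) σ`.

The triangle inequality gives `‖E‖ < 2 x` along the whole segment, so for `x ≤ (√3 - 1) σ / 2` the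
function `t ↦ d(γ t, Y)²` is supported from below by an affine function near each interior point.
A continuous function with this property is bounded by its values at the endpoints.
-/

section

open scoped Matrix.Norms.Frobenius RealInnerProductSpace Topology

variable {l m n : Type*} [Fintype l] [Fintype m] [Fintype n]

/-- The Frobenius inner product `⟪A, B⟫ = tr (Aᵀ B)`, compatible with Mathlib's Frobenius norm. -/
noncomputable abbrev frobeniusInnerProductSpace : InnerProductSpace ℝ (Matrix m n ℝ) where
  inner A B := (Aᵀ * B).trace
  norm_sq_eq_re_inner A := by
    have h : 0 ≤ ∑ i, ∑ j, A i j ^ 2 := by positivity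
    simp only [frobenius_norm_def, Real.norm_eq_abs, Real.rpow_two, sq_abs, ← Real.sqrt_eq_rpow,
      Real.sq_sqrt h, RCLike.re_to_real, trace, diag_apply, mul_apply, transpose_apply, ← sq]
    exact Finset.sum_comm
  conj_inner_symm A B := by
    rw [conj_trivial, ← trace_transpose, transpose_mul, transpose_transpose]
  add_left A B C := by rw [transpose_add, Matrix.add_mul, trace_add]
  smul_left A B c := by rw [transpose_smul, Matrix.smul_mul, trace_smul, conj_trivial, smul_eq_mul]

attribute [local instance] frobeniusInnerProductSpace

lemma frobenius_inner_def (A B : Matrix m n ℝ) : ⟪A, B⟫ = (Aᵀ * B).trace := rfl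

lemma frobenius_inner_transpose (A B : Matrix m n ℝ) : ⟪Aᵀ, Bᵀ⟫ = ⟪A, B⟫ := by
  rw [real_inner_comm, frobenius_inner_def, frobenius_inner_def, transpose_transpose,
    trace_mul_comm]

lemma frobenius_inner_mul_left (A : Matrix l m ℝ) (B : Matrix m n ℝ) (C : Matrix l n ℝ) :
    ⟪A * B, C⟫ = ⟪B, Aᵀ * C⟫ := by
  simp only [frobenius_inner_def, transpose_mul, Matrix.mul_assoc]

lemma frobenius_inner_mul_right (A : Matrix l m ℝ) (B : Matrix m n ℝ) (C : Matrix l n ℝ) :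
    ⟪A * B, C⟫ = ⟪A, C * Bᵀ⟫ := by
  rw [frobenius_inner_def, frobenius_inner_def, transpose_mul, Matrix.mul_assoc, trace_mul_comm,
    Matrix.mul_assoc]

lemma frobenius_inner_vecMulVec (A : Matrix m n ℝ) (v : m → ℝ) (w : n → ℝ) :
    ⟪A, vecMulVec v w⟫ = v ᵥ* A ⬝ᵥ w := by
  rw [frobenius_inner_def, mul_vecMulVec, trace_vecMulVec, mulVec_transpose]

lemma frobenius_norm_sq_eq_sum_dotProduct (A : Matrix m n ℝ) : ‖A‖ ^ 2 = ∑ i, A i ⬝ᵥ A i := by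
  rw [← real_inner_self_eq_norm_sq, ← frobenius_inner_transpose, frobenius_inner_def,
    transpose_transpose]
  rfl

lemma frobenius_inner_eq_zero_of_skew_of_isSymm {K S : Matrix n n ℝ} (hK : Kᵀ = -K)
    (hS : S.IsSymm) : ⟪K, S⟫ = 0 := by
  have h := frobenius_inner_transpose K S
  rw [hK, hS.eq, inner_neg_left] at h
  linarith

lemma frobenius_inner_transpose_mul_add_of_skew {Y Z D : Matrix m n ℝ} {K : Matrix n n ℝ}
    (hK : Kᵀ = -K) (hYZ : (Yᵀ * Z).IsSymm) (hZD : (Zᵀ * D).IsSymm) :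
    ⟪K, Yᵀ * (Z + D)⟫ = ⟪(Y - Z) * K, D⟫ := by
  have hdecomp : Yᵀ * (Z + D) = Yᵀ * Z + Zᵀ * D + (Y - Z)ᵀ * D := by
    rw [transpose_sub, Matrix.sub_mul, Matrix.mul_add]
    abel
  rw [hdecomp, inner_add_right, inner_add_right, frobenius_inner_eq_zero_of_skew_of_isSymm hK hYZ,
    frobenius_inner_eq_zero_of_skew_of_isSymm hK hZD, zero_add, zero_add, frobenius_inner_mul_left]

-- Pair `K` with the skew matrix `v wᵀ - w vᵀ`, where `w = v K` is orthogonal to `v`.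
lemma two_mul_vecMul_dotProduct_self_le_of_skew {K : Matrix n n ℝ} (hK : Kᵀ = -K) (v : n → ℝ) :
    2 * (v ᵥ* K ⬝ᵥ v ᵥ* K) ≤ (v ⬝ᵥ v) * ‖K‖ ^ 2 := by
  set w := v ᵥ* K with hw
  have swap (a b : n → ℝ) : a ᵥ* K ⬝ᵥ b = -(b ᵥ* K ⬝ᵥ a) := by
    rw [← dotProduct_mulVec, ← vecMul_transpose, hK, vecMul_neg, dotProduct_neg, dotProduct_comm]
  have hwv : w ⬝ᵥ v = 0 := by linarith [swap v v]
  set S := vecMulVec v w - vecMulVec w v with hS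
  have hKS : ⟪K, S⟫ = 2 * (w ⬝ᵥ w) := by
    rw [hS, inner_sub_right, frobenius_inner_vecMulVec, frobenius_inner_vecMulVec, swap w v, ← hw]
    ring
  have hSS : ‖S‖ ^ 2 = 2 * ((v ⬝ᵥ v) * (w ⬝ᵥ w)) := by
    rw [← real_inner_self_eq_norm_sq, hS]
    simp only [inner_sub_left, inner_sub_right, frobenius_inner_vecMulVec, vecMul_vecMulVec,
      smul_dotProduct, smul_eq_mul, hwv, dotProduct_comm v w]
    ring
  have hCS : (2 * (w ⬝ᵥ w)) ^ 2 ≤ ‖K‖ ^ 2 * (2 * ((v ⬝ᵥ v) * (w ⬝ᵥ w))) := by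
    rw [← hKS, ← hSS, ← mul_pow]
    exact sq_le_sq.mpr ((abs_real_inner_le_norm K S).trans (le_abs_self _))
  have hnonneg (a : n → ℝ) : 0 ≤ a ⬝ᵥ a := dotProduct_star_self_nonneg a
  rcases (hnonneg w).eq_or_lt with hww | hww
  · rw [← hww, mul_zero]
    exact mul_nonneg (hnonneg v) (sq_nonneg _)
  · exact le_of_mul_le_mul_right (by linarith) hww

lemma two_mul_norm_mul_sq_le_of_skew (E : Matrix m n ℝ) {K : Matrix n n ℝ} (hK : Kᵀ = -K) :
    2 * ‖E * K‖ ^ 2 ≤ ‖E‖ ^ 2 * ‖K‖ ^ 2 := by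
  simp only [frobenius_norm_sq_eq_sum_dotProduct, mul_apply_eq_vecMul]
  rw [← frobenius_norm_sq_eq_sum_dotProduct K, Finset.mul_sum, Finset.sum_mul]
  exact Finset.sum_le_sum fun i _ => two_mul_vecMul_dotProduct_self_le_of_skew hK (E i)

variable [DecidableEq n]

lemma frobenius_norm_mul_orthogonal (A : Matrix m n ℝ) {Q : Matrix n n ℝ}
    (hQ : Q ∈ orthogonalGroup n ℝ) : ‖A * Q‖ = ‖A‖ := by
  rw [← sq_eq_sq₀ (norm_nonneg _) (norm_nonneg _), ← real_inner_self_eq_norm_sq,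
    frobenius_inner_mul_right, Matrix.mul_assoc, (mem_orthogonalGroup_iff n ℝ).mp hQ,
    Matrix.mul_one, real_inner_self_eq_norm_sq]

lemma frobenius_norm_orthogonal_mul {Q : Matrix n n ℝ} (hQ : Q ∈ orthogonalGroup n ℝ)
    (A : Matrix n m ℝ) : ‖Q * A‖ = ‖A‖ := by
  rw [← sq_eq_sq₀ (norm_nonneg _) (norm_nonneg _), ← real_inner_self_eq_norm_sq,
    frobenius_inner_mul_left, ← Matrix.mul_assoc, (mem_orthogonalGroup_iff' n ℝ).mp hQ,
    Matrix.one_mul, real_inner_self_eq_norm_sq]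

lemma norm_mul_sub_sq_of_mem_orthogonalGroup (Y C : Matrix m n ℝ) {O : Matrix n n ℝ}
    (hO : O ∈ orthogonalGroup n ℝ) :
    ‖Y * O - C‖ ^ 2 = ‖Y - C‖ ^ 2 + 2 * ⟪1 - O, Yᵀ * C⟫ := by
  rw [norm_sub_sq_real, norm_sub_sq_real, frobenius_norm_mul_orthogonal Y hO,
    ← frobenius_inner_mul_left, Matrix.mul_sub, Matrix.mul_one, inner_sub_left]
  ring

-- First-order condition along the curves `t ↦ exp (t K)` with `K` skew, at `K = M - Mᵀ`.
lemma isSymm_of_forall_inner_orthogonal_le {M : Matrix n n ℝ}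
    (hM : ∀ O ∈ orthogonalGroup n ℝ, ⟪O, M⟫ ≤ ⟪1, M⟫) : M.IsSymm := by
  set K := M - Mᵀ with hK
  have hKskew : Kᵀ = -K := by rw [hK, transpose_sub, transpose_transpose, neg_sub]
  have hexp (t : ℝ) : NormedSpace.exp (t • K) ∈ orthogonalGroup n ℝ := by
    refine NormedSpace.exp_mem_unitary_of_mem_skewAdjoint (skewAdjoint.smul_mem t ?_)
    rwa [skewAdjoint.mem_iff, star_eq_conjTranspose, conjTranspose_eq_transpose_of_trivial]
  have hmax : IsLocalMax (fun t : ℝ => ⟪NormedSpace.exp (t • K), M⟫) 0 :=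
    .of_forall fun t => by simpa using hM _ (hexp t)
  have hderiv : HasDerivAt (fun t : ℝ => ⟪NormedSpace.exp (t • K), M⟫) ⟪K, M⟫ 0 :=
    ((hasDerivAt_exp_smul_const K (0 : ℝ)).inner ℝ (hasDerivAt_const 0 M)).congr_deriv (by simp)
  have hKM : ⟪K, M⟫ = 0 := hmax.hasDerivAt_eq_zero hderiv
  have hKMt : ⟪K, Mᵀ⟫ = 0 := by
    rw [← frobenius_inner_transpose, transpose_transpose, hKskew, inner_neg_left, hKM, neg_zero]
  have hK0 : K = 0 := inner_self_eq_zero (𝕜 := ℝ).mp <| by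
    nth_rewrite 2 [hK]
    rw [inner_sub_right, hKM, hKMt, sub_zero]
  exact (sub_eq_zero.mp hK0).symm

lemma isSymm_transpose_mul_of_forall_norm_sub_le {A B : Matrix m n ℝ}
    (h : ∀ O ∈ orthogonalGroup n ℝ, ‖B - A‖ ≤ ‖B * O - A‖) : (Bᵀ * A).IsSymm := by
  refine isSymm_of_forall_inner_orthogonal_le fun O hO => ?_
  have hsq := pow_le_pow_left₀ (norm_nonneg _) (h O hO) 2
  rw [norm_mul_sub_sq_of_mem_orthogonalGroup B A hO, inner_sub_left] at hsq
  linarith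

lemma norm_mul_sub_sq_eq_add_skew (Y C : Matrix m n ℝ) {O : Matrix n n ℝ}
    (hO : O ∈ orthogonalGroup n ℝ) :
    ‖Y * O - C‖ ^ 2 =
      ‖Y - C‖ ^ 2 + ⟪Y * (1 - O), C * (1 - O)⟫ + ⟪Oᵀ - O, Yᵀ * C⟫ := by
  have hsplit : (2 : ℝ) • (1 - O) = (1 - O) * (1 - O)ᵀ + (Oᵀ - O) := by
    have hOO : O * Oᵀ = 1 := (mem_orthogonalGroup_iff n ℝ).mp hO
    rw [transpose_sub, transpose_one, Matrix.sub_mul, Matrix.mul_sub, Matrix.mul_sub, hOO,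
      Matrix.one_mul, Matrix.one_mul, Matrix.mul_one, two_smul]
    abel
  have hquad : ⟪Y * (1 - O), C * (1 - O)⟫ = ⟪(1 - O) * (1 - O)ᵀ, Yᵀ * C⟫ := by
    rw [frobenius_inner_mul_left, frobenius_inner_mul_right, transpose_transpose, Matrix.mul_assoc]
  rw [norm_mul_sub_sq_of_mem_orthogonalGroup Y C hO, hquad, add_assoc, ← inner_add_left, ← hsplit,
    real_inner_smul_left]

lemma mul_norm_sq_le_inner_mul_mul {Y C : Matrix m n ℝ} {X : Matrix n n ℝ} {σ : ℝ}
    (hσ : σ * ‖X‖ ≤ ‖Y * X‖) (hC : ‖Y - C‖ ≤ σ) :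
    σ * (σ - ‖Y - C‖) * ‖X‖ ^ 2 ≤ ⟪Y * X, C * X⟫ := by
  have hCX : C * X = Y * X - (Y - C) * X := by rw [Matrix.sub_mul, sub_sub_cancel]
  have hCS : ⟪Y * X, (Y - C) * X⟫ ≤ ‖Y * X‖ * (‖Y - C‖ * ‖X‖) :=
    (real_inner_le_norm _ _).trans <|
      mul_le_mul_of_nonneg_left (frobenius_norm_mul _ _) (norm_nonneg _)
  have hgap : ‖Y - C‖ * ‖X‖ ≤ σ * ‖X‖ := mul_le_mul_of_nonneg_right hC (norm_nonneg _)
  calc σ * (σ - ‖Y - C‖) * ‖X‖ ^ 2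
      = σ * ‖X‖ * (σ * ‖X‖ - ‖Y - C‖ * ‖X‖) := by ring
    _ ≤ ‖Y * X‖ * (‖Y * X‖ - ‖Y - C‖ * ‖X‖) :=
      mul_le_mul hσ (sub_le_sub_right hσ _) (sub_nonneg.mpr hgap) (norm_nonneg _)
    _ ≤ ⟪Y * X, C * X⟫ := by
      rw [hCX, inner_sub_right, real_inner_self_eq_norm_sq]
      linarith

lemma norm_mul_transpose_sub_sq_le (E : Matrix m n ℝ) (O : Matrix n n ℝ) :
    ‖E * (Oᵀ - O)‖ ^ 2 ≤ 2 * (‖E‖ ^ 2 * ‖1 - O‖ ^ 2) := by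
  have hskew : (Oᵀ - O)ᵀ = -(Oᵀ - O) := by
    rw [transpose_sub, transpose_transpose, neg_sub]
  have hnorm : ‖Oᵀ - O‖ ≤ 2 * ‖1 - O‖ :=
    calc ‖Oᵀ - O‖ = ‖(1 - O) - (1 - O)ᵀ‖ := by
          rw [transpose_sub, transpose_one, sub_sub_sub_cancel_left]
      _ ≤ ‖1 - O‖ + ‖(1 - O)ᵀ‖ := norm_sub_le _ _
      _ = 2 * ‖1 - O‖ := by rw [frobenius_norm_transpose, two_mul]
  have hsq : ‖Oᵀ - O‖ ^ 2 ≤ (2 * ‖1 - O‖) ^ 2 := pow_le_pow_left₀ (norm_nonneg _) hnorm 2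
  have h := two_mul_norm_mul_sq_le_of_skew E hskew
  linarith [mul_le_mul_of_nonneg_left hsq (sq_nonneg ‖E‖)]

lemma norm_sub_sq_sub_two_mul_inner_le {Y Z D : Matrix m n ℝ} {O : Matrix n n ℝ} {σ : ℝ}
    (hO : O ∈ orthogonalGroup n ℝ) (hσ : ∀ X : Matrix n n ℝ, σ * ‖X‖ ≤ ‖Y * X‖)
    (hYZ : (Yᵀ * Z).IsSymm) (hZD : (Zᵀ * D).IsSymm) (hw : ‖Y - (Z + D)‖ ≤ σ)
    (hδ : ‖Y - Z‖ ^ 2 ≤ 2 * (σ * (σ - ‖Y - (Z + D)‖))) :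
    ‖Y - Z‖ ^ 2 - 2 * ⟪Y - Z, D⟫ ≤ ‖Y * O - (Z + D)‖ ^ 2 := by
  set E := Y - Z with hE
  set K := Oᵀ - O with hK
  have hKskew : Kᵀ = -K := by rw [hK, transpose_sub, transpose_transpose, neg_sub]
  have hquad := mul_norm_sq_le_inner_mul_mul (hσ (1 - O)) hw
  have hEK : ‖E * K‖ ^ 2 ≤ 4 * (σ * (σ - ‖Y - (Z + D)‖) * ‖1 - O‖ ^ 2) := by
    have h := norm_mul_transpose_sub_sq_le E O
    linarith [mul_le_mul_of_nonneg_right hδ (sq_nonneg ‖1 - O‖)]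
  have hsquare : 0 ≤ ‖E * K + (2 : ℝ) • D‖ ^ 2 := sq_nonneg _
  have hexpand : ‖Y - (Z + D)‖ ^ 2 = ‖E‖ ^ 2 - 2 * ⟪E, D⟫ + ‖D‖ ^ 2 := by
    rw [← sub_sub, ← hE, norm_sub_sq_real]
  rw [norm_add_sq_real, real_inner_smul_right, norm_smul, Real.norm_two, mul_pow] at hsquare
  rw [norm_mul_sub_sq_eq_add_skew Y (Z + D) hO, hexpand,
    frobenius_inner_transpose_mul_add_of_skew hKskew hYZ hZD]
  linarith

lemma rank_eq_card_of_norm_sub_lt {Y Z : Matrix m n ℝ} {σ : ℝ}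
    (hσ : ∀ X : Matrix n n ℝ, σ * ‖X‖ ≤ ‖Y * X‖) (hYZ : ‖Y - Z‖ < σ) :
    Z.rank = Fintype.card n := by
  have hcancel (X : Matrix n n ℝ) (hX : Z * X = 0) : X = 0 := by
    have h : σ * ‖X‖ ≤ ‖Y - Z‖ * ‖X‖ :=
      calc σ * ‖X‖ ≤ ‖Y * X‖ := hσ X
        _ = ‖(Y - Z) * X‖ := by rw [Matrix.sub_mul, hX, sub_zero]
        _ ≤ ‖Y - Z‖ * ‖X‖ := frobenius_norm_mul _ _
    by_contra hX0
    exact hYZ.not_ge (le_of_mul_le_mul_right h (norm_pos_iff.mpr hX0))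
  have hinj : Function.Injective Z.mulVecLin := by
    refine (injective_iff_map_eq_zero _).mpr fun v hv => ?_
    rw [mulVecLin_apply] at hv
    have hvv : vecMulVec v v = 0 := hcancel _ (by rw [mul_vecMulVec, hv, zero_vecMulVec])
    simpa using hvv
  rw [Matrix.rank, LinearMap.finrank_range_of_inj hinj, Module.finrank_fintype_fun_eq_card]

lemma isCompact_orthogonalGroup : IsCompact (orthogonalGroup n ℝ : Set (Matrix n n ℝ)) := by
  refine Metric.isCompact_of_isClosed_isBounded isClosed_unitary ?_
  refine (Metric.isBounded_closedBall (x := 0) (r := ‖(1 : Matrix n n ℝ)‖)).subset fun Q hQ => ?_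
  rw [mem_closedBall_zero_iff, ← Matrix.one_mul Q, frobenius_norm_mul_orthogonal 1 hQ]

end

section

open scoped Topology

lemma le_max_of_local_support {f : ℝ → ℝ} {a b : ℝ} (hf : ContinuousOn f (Set.Icc a b))
    (hsupp : ∀ t ∈ Set.Ioo a b, ∃ m : ℝ, ∀ᶠ u in 𝓝 0, f t + m * u ≤ f (t + u)) :
    ∀ t ∈ Set.Icc a b, f t ≤ max (f a) (f b) := by
  intro t ht
  obtain ⟨t₁, ht₁, hmax⟩ := isCompact_Icc.exists_isMaxOn ⟨t, ht⟩ hf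
  obtain ⟨t₀, ⟨ht₀, hft₀⟩, hleast⟩ :=
    (isCompact_Icc.of_isClosed_subset (hf.preimage_isClosed_of_isClosed isClosed_Icc
      (isClosed_Ici (a := f t₁))) Set.inter_subset_left).exists_isLeast ⟨t₁, ht₁, le_refl (f t₁)⟩
  have hmax₀ : ∀ s ∈ Set.Icc a b, f s ≤ f t₀ := fun s hs => (hmax hs).trans hft₀
  refine (hmax₀ t ht).trans ?_
  rcases ht₀.1.eq_or_lt with rfl | hat₀
  · exact le_max_left _ _
  rcases ht₀.2.eq_or_lt with rfl | ht₀b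
  · exact le_max_right _ _
  exfalso
  obtain ⟨m, hm⟩ := hsupp t₀ ⟨hat₀, ht₀b⟩
  have hnear : ∀ᶠ u in 𝓝 (0 : ℝ), t₀ + u ∈ Set.Icc a b :=
    (continuous_const_add t₀).tendsto' 0 t₀ (add_zero _) |>.eventually (Icc_mem_nhds hat₀ ht₀b)
  have hm0 : m = 0 := by
    have hlocal : IsLocalMax (fun u => m * u) 0 := by
      filter_upwards [hm, hnear] with u hu hu'
      linarith [hmax₀ _ hu']
    simpa using hlocal.hasDerivAt_eq_zero ((hasDerivAt_id 0).const_mul m)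
  obtain ⟨u, hu0, hu, hu'⟩ :=
    ((eventually_mem_nhdsWithin (a := (0 : ℝ)) (s := Set.Iio 0)).and
      ((hm.and hnear).filter_mono nhdsWithin_le_nhds)).exists
  have hlower := hleast ⟨hu', hft₀.trans (by simpa [hm0] using hu)⟩
  linarith [Set.mem_Iio.mp hu0]

end

section

open scoped MatrixOrder

lemma eigVal_self_le_eigenvalues {n : ℕ} {A : Matrix (Fin n) (Fin n) ℝ} (hA : A.IsHermitian)
    (i : Fin n) : eigVal A n ≤ hA.eigenvalues i := by
  have hn : n - n < n := by have := i.pos; omega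
  rw [eigVal, dif_pos hA, dif_pos hn]
  have hle : (⟨n - n, hn⟩ : Fin n) ≤ (Tuple.sort hA.eigenvalues).symm i := by
    simp [Fin.le_def]
  simpa using Tuple.monotone_sort hA.eigenvalues hle

lemma eigVal_smul_one_le {n : ℕ} {A : Matrix (Fin n) (Fin n) ℝ} (hA : A.IsHermitian) :
    eigVal A n • (1 : Matrix (Fin n) (Fin n) ℝ) ≤ A := by
  rw [← Algebra.algebraMap_eq_smul_one]
  refine algebraMap_le_of_le_spectrum (fun x hx => ?_) hA.isSelfAdjoint
  rw [hA.spectrum_real_eq_range_eigenvalues] at hx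
  obtain ⟨i, rfl⟩ := hx
  exact eigVal_self_le_eigenvalues hA i

lemma eigVal_nonneg {n : ℕ} {A : Matrix (Fin n) (Fin n) ℝ} (hA : A.PosSemidef) (i : ℕ) :
    0 ≤ eigVal A i := by
  rw [eigVal]
  split_ifs with h
  · exact hA.eigenvalues_nonneg _
  all_goals rfl

end

section

open scoped Matrix.Norms.Frobenius RealInnerProductSpace Topology

attribute [local instance] frobeniusInnerProductSpace

variable {m : Type*} [Fintype m] {p r : ℕ}

lemma frob_eq_norm (A : Matrix (Fin p) (Fin r) ℝ) : frob A = ‖A‖ := by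
  simp [frob, frobenius_norm_def, Real.sqrt_eq_rpow]

lemma isOrtho_iff_mem_orthogonalGroup {Q : Matrix (Fin r) (Fin r) ℝ} :
    IsOrtho Q ↔ Q ∈ orthogonalGroup (Fin r) ℝ :=
  (mem_orthogonalGroup_iff' (Fin r) ℝ).symm

lemma sval_mul_norm_le_norm_mul (Y : Matrix (Fin p) (Fin r) ℝ) (X : Matrix (Fin r) m ℝ) :
    sval Y r * ‖X‖ ≤ ‖Y * X‖ := by
  have hpos : (Yᵀ * Y).PosSemidef := by
    simpa only [conjTranspose_eq_transpose_of_trivial] using posSemidef_conjTranspose_mul_self Y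
  have hdiff : (Yᵀ * Y - eigVal (Yᵀ * Y) r • 1).PosSemidef := eigVal_smul_one_le hpos.isHermitian
  have htrace := (hdiff.conjTranspose_mul_mul_same X).trace_nonneg
  refine le_of_sq_le_sq ?_ (norm_nonneg _)
  rw [mul_pow, sval, Real.sq_sqrt (eigVal_nonneg hpos r), ← sub_nonneg,
    ← real_inner_self_eq_norm_sq, ← real_inner_self_eq_norm_sq]
  convert htrace using 1
  simp only [frobenius_inner_def, conjTranspose_eq_transpose_of_trivial, Matrix.mul_sub,
    Matrix.sub_mul, Matrix.mul_smul, Matrix.smul_mul, Matrix.mul_one, trace_sub, trace_smul,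
    smul_eq_mul, transpose_mul, Matrix.mul_assoc]

lemma sval_mul_norm_le_norm_mul_orthogonal_mul (Y : Matrix (Fin p) (Fin r) ℝ)
    {O : Matrix (Fin r) (Fin r) ℝ} (hO : O ∈ orthogonalGroup (Fin r) ℝ)
    (X : Matrix (Fin r) m ℝ) : sval Y r * ‖X‖ ≤ ‖Y * O * X‖ := by
  rw [Matrix.mul_assoc, ← frobenius_norm_orthogonal_mul hO X]
  exact sval_mul_norm_le_norm_mul Y (O * X)

lemma dOrth_le_norm {Q : Matrix (Fin r) (Fin r) ℝ} (hQ : Q ∈ orthogonalGroup (Fin r) ℝ)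
    (Z Y : Matrix (Fin p) (Fin r) ℝ) : dOrth Z Y ≤ ‖Y * Q - Z‖ :=
  csInf_le ⟨0, by rintro _ ⟨O, -, rfl⟩; exact Real.sqrt_nonneg _⟩
    ⟨Q, isOrtho_iff_mem_orthogonalGroup.mpr hQ, (frob_eq_norm _).symm⟩

lemma exists_dOrth_eq_norm (Z Y : Matrix (Fin p) (Fin r) ℝ) :
    ∃ O ∈ orthogonalGroup (Fin r) ℝ, dOrth Z Y = ‖Y * O - Z‖ := by
  have hcont : Continuous fun O : Matrix (Fin r) (Fin r) ℝ => ‖Y * O - Z‖ :=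
    ((continuous_const.matrix_mul continuous_id).sub continuous_const).norm
  obtain ⟨O, hO, hmin⟩ := isCompact_orthogonalGroup.exists_isMinOn
    ⟨1, one_mem (orthogonalGroup (Fin r) ℝ)⟩ hcont.continuousOn
  refine ⟨O, hO, (dOrth_le_norm hO Z Y).antisymm (le_csInf ?_ ?_)⟩
  · exact ⟨_, O, isOrtho_iff_mem_orthogonalGroup.mpr hO, rfl⟩
  · rintro _ ⟨Q, hQ, rfl⟩
    rw [frob_eq_norm]
    exact hmin (isOrtho_iff_mem_orthogonalGroup.mp hQ)

lemma dOrth_nonneg (Z Y : Matrix (Fin p) (Fin r) ℝ) : 0 ≤ dOrth Z Y := by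
  obtain ⟨O, -, h⟩ := exists_dOrth_eq_norm Z Y
  exact h ▸ norm_nonneg _

lemma dOrth_le_dOrth_swap (Z Y : Matrix (Fin p) (Fin r) ℝ) : dOrth Z Y ≤ dOrth Y Z := by
  obtain ⟨O, hO, h⟩ := exists_dOrth_eq_norm Y Z
  calc dOrth Z Y ≤ ‖Y * star O - Z‖ := dOrth_le_norm (Unitary.star_mem hO) Z Y
    _ = ‖(Y * star O - Z) * O‖ := (frobenius_norm_mul_orthogonal _ hO).symm
    _ = ‖Y - Z * O‖ := by
      rw [Matrix.sub_mul, Matrix.mul_assoc, Unitary.star_mul_self_of_mem hO, Matrix.mul_one]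
    _ = dOrth Y Z := by rw [h, norm_sub_rev]

lemma dOrth_comm (Z Y : Matrix (Fin p) (Fin r) ℝ) : dOrth Z Y = dOrth Y Z :=
  (dOrth_le_dOrth_swap Z Y).antisymm (dOrth_le_dOrth_swap Y Z)

lemma dOrth_triangle (X Y Z : Matrix (Fin p) (Fin r) ℝ) : dOrth X Z ≤ dOrth X Y + dOrth Y Z := by
  obtain ⟨O, hO, hXY⟩ := exists_dOrth_eq_norm X Y
  obtain ⟨R, hR, hYZ⟩ := exists_dOrth_eq_norm Y Z
  calc dOrth X Z ≤ ‖Z * (R * O) - X‖ := dOrth_le_norm (mul_mem hR hO) X Z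
    _ = ‖(Y * O - X) + (Z * R - Y) * O‖ := by
      rw [Matrix.sub_mul, Matrix.mul_assoc, sub_add_sub_cancel']
    _ ≤ ‖Y * O - X‖ + ‖(Z * R - Y) * O‖ := norm_add_le _ _
    _ = dOrth X Y + dOrth Y Z := by rw [frobenius_norm_mul_orthogonal _ hO, hXY, hYZ]

lemma dOrth_le_dOrth_add_norm_sub (Z W Y : Matrix (Fin p) (Fin r) ℝ) :
    dOrth Z Y ≤ dOrth W Y + ‖Z - W‖ := by
  have hZW : dOrth Z W ≤ ‖Z - W‖ := by
    simpa [norm_sub_rev W Z] using dOrth_le_norm (one_mem (orthogonalGroup (Fin r) ℝ)) Z W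
  linarith [dOrth_triangle Z W Y]

lemma lipschitzWith_dOrth_left (Y : Matrix (Fin p) (Fin r) ℝ) :
    LipschitzWith 1 fun Z => dOrth Z Y :=
  .of_le_add fun Z W => by simpa only [dist_eq_norm] using dOrth_le_dOrth_add_norm_sub Z W Y

lemma dOrth_mul_orthogonal_le {Q : Matrix (Fin r) (Fin r) ℝ}
    (hQ : Q ∈ orthogonalGroup (Fin r) ℝ) (Z Y : Matrix (Fin p) (Fin r) ℝ) :
    dOrth (Z * Q) Y ≤ dOrth Z Y := by
  have hQZ : dOrth (Z * Q) Z ≤ ‖Z * Q - Z * Q‖ := dOrth_le_norm hQ _ _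
  rw [sub_self, norm_zero] at hQZ
  linarith [dOrth_triangle (Z * Q) Z Y]

lemma rank_eq_of_dOrth_lt_sval {Z Y : Matrix (Fin p) (Fin r) ℝ} (h : dOrth Z Y < sval Y r) :
    Z.rank = r := by
  obtain ⟨O, hO, hZY⟩ := exists_dOrth_eq_norm Z Y
  simpa using rank_eq_card_of_norm_sub_lt
    (sval_mul_norm_le_norm_mul_orthogonal_mul Y hO) (hZY ▸ h)

-- `(√3 - 1) σ` is the positive root of `d ^ 2 = 2 σ (σ - d)`.
lemma lt_and_sq_lt_of_lt_sqrt_three_sub_one_mul {d σ : ℝ} (hd : 0 ≤ d) (h : d < (√3 - 1) * σ) :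
    d < σ ∧ d ^ 2 < 2 * (σ * (σ - d)) := by
  have hsq : √3 ^ 2 = 3 := Real.sq_sqrt (by norm_num)
  have h1 : 1 < √3 := Real.lt_sqrt_of_sq_lt (by norm_num)
  have h2 : √3 < 2 := (Real.sqrt_lt' two_pos).mpr (by norm_num)
  have hσ : 0 < σ := pos_of_mul_pos_right (hd.trans_lt h) (sub_pos.mpr h1).le
  refine ⟨by nlinarith, ?_⟩
  have hroot : (d + σ) ^ 2 < (√3 * σ) ^ 2 :=
    pow_lt_pow_left₀ (by linarith) (by linarith) two_ne_zero
  rw [mul_pow, hsq] at hroot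
  linarith

lemma exists_local_support_dOrth_sq {Y Z D : Matrix (Fin p) (Fin r) ℝ}
    (hZD : (Zᵀ * D).IsSymm) (hd : dOrth Z Y < (√3 - 1) * sval Y r) :
    ∃ a : ℝ, ∀ᶠ u in 𝓝 (0 : ℝ), dOrth Z Y ^ 2 + a * u ≤ dOrth (Z + u • D) Y ^ 2 := by
  obtain ⟨hdσ, hdsq⟩ := lt_and_sq_lt_of_lt_sqrt_three_sub_one_mul (dOrth_nonneg Z Y) hd
  obtain ⟨O, hO, hZY⟩ := exists_dOrth_eq_norm Z Y
  have hsymm : ((Y * O)ᵀ * Z).IsSymm := isSymm_transpose_mul_of_forall_norm_sub_le fun R hR => by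
    rw [← hZY, Matrix.mul_assoc]
    exact dOrth_le_norm (mul_mem hO hR) Z Y
  rw [hZY] at hdσ hdsq ⊢
  have hw : Filter.Tendsto (fun u : ℝ => ‖Y * O - (Z + u • D)‖) (𝓝 0) (𝓝 ‖Y * O - Z‖) :=
    Continuous.tendsto' (by fun_prop) _ _ (by simp)
  have hgap := ((hw.const_sub (sval Y r)).const_mul (sval Y r)).const_mul 2
  refine ⟨-2 * ⟪Y * O - Z, D⟫, ?_⟩
  filter_upwards [hw.eventually_lt_const hdσ, hgap.eventually_const_lt hdsq] with u hwu hδu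
  obtain ⟨R, hR, hR'⟩ := exists_dOrth_eq_norm (Z + u • D) Y
  have hZuD : (Zᵀ * (u • D)).IsSymm := by
    rw [Matrix.mul_smul]
    exact hZD.smul u
  have hlower := norm_sub_sq_sub_two_mul_inner_le (mul_mem (Unitary.star_mem hO) hR)
    (sval_mul_norm_le_norm_mul_orthogonal_mul Y hO) hsymm hZuD hwu.le hδu.le
  rw [Matrix.mul_assoc Y, ← Matrix.mul_assoc O, Unitary.mul_star_self_of_mem hO, Matrix.one_mul,
    ← hR', real_inner_smul_right] at hlower
  linarith

lemma dOrth_add_smul_lt_two_mul {Y Z D : Matrix (Fin p) (Fin r) ℝ} {x : ℝ}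
    (h₀ : dOrth Z Y < x) (h₁ : dOrth (Z + D) Y < x) (hD : ‖D‖ < 2 * x) {t : ℝ}
    (ht : t ∈ Set.Icc (0 : ℝ) 1) : dOrth (Z + t • D) Y < 2 * x := by
  have hleft := dOrth_le_dOrth_add_norm_sub (Z + t • D) Z Y
  have hright := dOrth_le_dOrth_add_norm_sub (Z + t • D) (Z + D) Y
  have hdiff : Z + t • D - (Z + D) = -((1 - t) • D) := by
    rw [sub_smul, one_smul]
    abel
  rw [add_sub_cancel_left, norm_smul, Real.norm_of_nonneg ht.1] at hleft
  rw [hdiff, norm_neg, norm_smul, Real.norm_of_nonneg (sub_nonneg.mpr ht.2)] at hright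
  linarith

lemma dOrth_add_smul_lt {Y Z D : Matrix (Fin p) (Fin r) ℝ} {x : ℝ}
    (hx : x ≤ (√3 - 1) / 2 * sval Y r) (hZD : (Zᵀ * D).IsSymm)
    (h₀ : dOrth Z Y < x) (h₁ : dOrth (Z + D) Y < x) (hD : ‖D‖ < 2 * x) {t : ℝ}
    (ht : t ∈ Set.Icc (0 : ℝ) 1) : dOrth (Z + t • D) Y < x := by
  have hcont : Continuous fun s : ℝ => dOrth (Z + s • D) Y ^ 2 :=
    ((lipschitzWith_dOrth_left Y).continuous.comp (by fun_prop)).pow 2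
  have hsupp : ∀ s ∈ Set.Ioo (0 : ℝ) 1, ∃ a : ℝ, ∀ᶠ u in 𝓝 (0 : ℝ),
      dOrth (Z + s • D) Y ^ 2 + a * u ≤ dOrth (Z + (s + u) • D) Y ^ 2 := fun s hs => by
    have hsymm : ((Z + s • D)ᵀ * D).IsSymm := by
      rw [transpose_add, transpose_smul, Matrix.add_mul, Matrix.smul_mul]
      have hDD : (Dᵀ * D).IsSymm := by rw [IsSymm, transpose_mul, transpose_transpose]
      exact hZD.add (hDD.smul s)
    have hnear := dOrth_add_smul_lt_two_mul h₀ h₁ hD (Set.Ioo_subset_Icc_self hs)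
    simpa only [add_smul, add_assoc] using exists_local_support_dOrth_sq hsymm (by linarith)
  have hmax := le_max_of_local_support hcont.continuousOn hsupp t ht
  have hx0 : 0 ≤ x := (dOrth_nonneg Z Y).trans h₀.le
  refine lt_of_pow_lt_pow_left₀ 2 hx0 (hmax.trans_lt (max_lt ?_ ?_))
  · simpa using pow_lt_pow_left₀ h₀ (dOrth_nonneg Z Y) two_ne_zero
  · simpa using pow_lt_pow_left₀ h₁ (dOrth_nonneg (Z + D) Y) two_ne_zero

lemma isSymm_transpose_mul_sub_of_forall_norm_sub_le {Y₁ Y₂ : Matrix (Fin p) (Fin r) ℝ}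
    (h : ∀ O ∈ orthogonalGroup (Fin r) ℝ, ‖Y₂ - Y₁‖ ≤ ‖Y₂ * O - Y₁‖) :
    (Y₁ᵀ * (Y₂ - Y₁)).IsSymm := by
  have h₁₁ : (Y₁ᵀ * Y₁).IsSymm := by rw [IsSymm, transpose_mul, transpose_transpose]
  have h₁₂ : (Y₁ᵀ * Y₂).IsSymm := by
    simpa only [transpose_mul, transpose_transpose] using
      (isSymm_transpose_mul_of_forall_norm_sub_le h).transpose
  rw [Matrix.mul_sub]
  exact h₁₂.sub h₁₁

lemma div_three_le_sqrt_three_sub_one_div_two_mul {σ : ℝ} (hσ : 0 ≤ σ) :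
    σ / 3 ≤ (√3 - 1) / 2 * σ := by
  have h : 5 / 3 ≤ √3 := Real.le_sqrt_of_sq_le (by norm_num)
  rw [div_eq_inv_mul]
  exact mul_le_mul_of_nonneg_right (by linarith) hσ

theorem stmt0_general (Y Y₁ Y₂ : Matrix (Fin p) (Fin r) ℝ)
    (x : ℝ) (hxr : x ≤ (√3 - 1) / 2 * sval Y r)
    (hd₁ : dOrth Y₁ Y < x) (hd₂ : dOrth Y₂ Y < x)
    (Q : Matrix (Fin r) (Fin r) ℝ) (hQ : IsOrtho Q)
    (hQmin : ∀ O : Matrix (Fin r) (Fin r) ℝ, IsOrtho O →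
      frob (Y₂ * Q - Y₁) ≤ frob (Y₂ * O - Y₁)) :
    ∀ t : ℝ, t ∈ Set.Icc (0 : ℝ) 1 →
      (Y₁ + t • (Y₂ * Q - Y₁)).rank = r ∧ dOrth (Y₁ + t • (Y₂ * Q - Y₁)) Y < x := by
  intro t ht
  simp only [isOrtho_iff_mem_orthogonalGroup, frob_eq_norm] at hQ hQmin
  have hD : ‖Y₂ * Q - Y₁‖ < 2 * x := by
    obtain ⟨O, hO, h₁₂⟩ := exists_dOrth_eq_norm Y₁ Y₂
    linarith [hQmin O hO, dOrth_triangle Y₁ Y Y₂, dOrth_comm Y Y₂]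
  have hsymm : (Y₁ᵀ * (Y₂ * Q - Y₁)).IsSymm :=
    isSymm_transpose_mul_sub_of_forall_norm_sub_le fun O hO => by
      rw [Matrix.mul_assoc]
      exact hQmin _ (mul_mem hQ hO)
  have hend : dOrth (Y₁ + (Y₂ * Q - Y₁)) Y < x := by
    rw [add_sub_cancel]
    exact (dOrth_mul_orthogonal_le hQ Y₂ Y).trans_lt hd₂
  have hdist := dOrth_add_smul_lt hxr hsymm hd₁ hend hD ht
  have hdσ : dOrth (Y₁ + t • (Y₂ * Q - Y₁)) Y < sval Y r :=
    (lt_and_sq_lt_of_lt_sqrt_three_sub_one_mul (dOrth_nonneg _ _)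
      (by linarith [dOrth_nonneg Y₁ Y])).1
  exact ⟨rank_eq_of_dOrth_lt_sval hdσ, hdist⟩

end

/-- geodesic convexity of balls of radius at most `σ_r(Y)/3` in the quotient
manifold: the minimizing geodesic joining two points of the ball stays in the ball and
consists of full-rank matrices. -/
theorem stmt0 {p r : ℕ} (hr : 1 ≤ r) (hrp : r ≤ p)
    (Y Y₁ Y₂ : Matrix (Fin p) (Fin r) ℝ)
    (hY : Y.rank = r) (hY₁ : Y₁.rank = r) (hY₂ : Y₂.rank = r)
    (x : ℝ) (hx : 0 < x) (hxr : x ≤ sval Y r / 3)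
    (hd₁ : dOrth Y₁ Y < x) (hd₂ : dOrth Y₂ Y < x)
    (Q : Matrix (Fin r) (Fin r) ℝ) (hQ : IsOrtho Q)
    (hQmin : ∀ O : Matrix (Fin r) (Fin r) ℝ, IsOrtho O →
      frob (Y₂ * Q - Y₁) ≤ frob (Y₂ * O - Y₁)) :
    ∀ t : ℝ, t ∈ Set.Icc (0 : ℝ) 1 →
      (Y₁ + t • (Y₂ * Q - Y₁)).rank = r ∧ dOrth (Y₁ + t • (Y₂ * Q - Y₁)) Y < x := by
  exact stmt0_general Y Y₁ Y₂ x
    (hxr.trans (div_three_le_sqrt_three_sub_one_div_two_mul (Real.sqrt_nonneg _)))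
    hd₁ hd₂ Q hQ hQmin
end

section
/- Let A : ℝ → ℝ^{p₁×p₂}, σ : ℝ → ℝ, u : ℝ → ℝ^{p₁} and v : ℝ → ℝ^{p₂} be twice differentiable functions such that for all t: ‖u(t)‖₂ = ‖v(t)‖₂ = 1, A(t)v(t) = σ(t)u(t) and A(t)ᵀu(t) = σ(t)v(t) (so σ(t) is a singular value of A(t) with left singular vector u(t) and right singular vector v(t)). Then for every t: σ'(t) = ⟨u(t), A'(t)v(t)⟩ and σ''(t) = ⟨u(t), A''(t)v(t)⟩ + ⟨A'(t), (d/dt)(u(t)v(t)ᵀ)⟩, where the inner product of vectors is the Euclidean one and the inner product of matrices is ⟨A,B⟩ = tr(AᵀB). -/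
open Matrix

/-!
Normalisation gives `σ = uᵀ A v`, and differentiating yields
`σ' = uᵀ A' v + (u'ᵀ A v + uᵀ A v')`. The bracket equals `σ (u'ᵀ u + vᵀ v')`, which vanishes
because vectors of constant length are orthogonal to their velocities. So `σ' = uᵀ A' v`, and
differentiating once more gives `σ'' = uᵀ A'' v + (u'ᵀ A' v + uᵀ A' v')`, whose bracket is the
trace inner product of `A'` with the derivative of `u vᵀ`.
-/

theorem trInner_eq_trace {p q : ℕ} (A B : Matrix (Fin p) (Fin q) ℝ) :
    trInner A B = (Aᵀ * B).trace :=
  Finset.sum_comm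

theorem trace_transpose_mul_vecMulVec {m n R : Type*} [Fintype m] [Fintype n] [CommSemiring R]
    (A : Matrix m n R) (x : m → R) (y : n → R) :
    (Aᵀ * vecMulVec x y).trace = x ⬝ᵥ A *ᵥ y := by
  rw [mul_vecMulVec, trace_vecMulVec, mulVec_transpose, dotProduct_mulVec]

/-- `σ` is a singular value of `A` with unit left and right singular vectors `u` and `v`. The
pairing is the bilinear dot product, which over `ℝ` is the Euclidean one, and no sign condition
is imposed on `σ`. -/
structure IsSingularTriple {m n R : Type*} [Fintype m] [Fintype n] [CommSemiring R]
    (A : Matrix m n R) (σ : R) (u : m → R) (v : n → R) : Prop where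
  left_unit : u ⬝ᵥ u = 1
  right_unit : v ⬝ᵥ v = 1
  mulVec_eq : A *ᵥ v = σ • u
  transpose_mulVec_eq : Aᵀ *ᵥ u = σ • v

namespace IsSingularTriple

variable {m n R : Type*} [Fintype m] [Fintype n] [CommSemiring R]
  {A : Matrix m n R} {σ : R} {u : m → R} {v : n → R}

theorem dotProduct_mulVec_right (h : IsSingularTriple A σ u v) (x : m → R) :
    x ⬝ᵥ A *ᵥ v = σ * (x ⬝ᵥ u) := by
  rw [h.mulVec_eq, dotProduct_smul, smul_eq_mul]

theorem dotProduct_mulVec_left (h : IsSingularTriple A σ u v) (y : n → R) :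
    u ⬝ᵥ A *ᵥ y = σ * (v ⬝ᵥ y) := by
  rw [dotProduct_mulVec, ← mulVec_transpose, h.transpose_mulVec_eq, smul_dotProduct, smul_eq_mul]

theorem eq_dotProduct_mulVec (h : IsSingularTriple A σ u v) : σ = u ⬝ᵥ A *ᵥ v := by
  rw [h.dotProduct_mulVec_right, h.left_unit, mul_one]

end IsSingularTriple

section ProductRules

variable {𝕜 R m n : Type*} [NontriviallyNormedField 𝕜] [NormedRing R] [NormedAlgebra 𝕜 R]
  [Fintype n] {S : Set 𝕜} {t : 𝕜}

theorem hasDerivWithinAt_dotProduct {x y : 𝕜 → n → R} {x' y' : n → R}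
    (hx : HasDerivWithinAt x x' S t) (hy : HasDerivWithinAt y y' S t) :
    HasDerivWithinAt (fun s => x s ⬝ᵥ y s) (x' ⬝ᵥ y t + x t ⬝ᵥ y') S t := by
  simp only [dotProduct, ← Finset.sum_add_distrib]
  exact HasDerivWithinAt.fun_sum fun i _ =>
    (hasDerivWithinAt_pi.1 hx i).fun_mul (hasDerivWithinAt_pi.1 hy i)

theorem hasDerivWithinAt_mulVec {A : 𝕜 → Matrix m n R} {A' : Matrix m n R}
    {y : 𝕜 → n → R} {y' : n → R}
    (hA : ∀ i j, HasDerivWithinAt (fun s => A s i j) (A' i j) S t)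
    (hy : HasDerivWithinAt y y' S t) :
    HasDerivWithinAt (fun s => A s *ᵥ y s) (A' *ᵥ y t + A t *ᵥ y') S t :=
  hasDerivWithinAt_pi.2 fun i => hasDerivWithinAt_dotProduct (hasDerivWithinAt_pi.2 (hA i)) hy

theorem hasDerivWithinAt_dotProduct_mulVec [Fintype m] {A : 𝕜 → Matrix m n R} {A' : Matrix m n R}
    {x : 𝕜 → m → R} {x' : m → R} {y : 𝕜 → n → R} {y' : n → R}
    (hA : ∀ i j, HasDerivWithinAt (fun s => A s i j) (A' i j) S t)
    (hx : HasDerivWithinAt x x' S t) (hy : HasDerivWithinAt y y' S t) :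
    HasDerivWithinAt (fun s => x s ⬝ᵥ A s *ᵥ y s)
      (x t ⬝ᵥ A' *ᵥ y t + (x' ⬝ᵥ A t *ᵥ y t + x t ⬝ᵥ A t *ᵥ y')) S t := by
  refine (hasDerivWithinAt_dotProduct hx (hasDerivWithinAt_mulVec hA hy)).congr_deriv ?_
  rw [dotProduct_add, add_left_comm]

end ProductRules

section Variation

variable {𝕜 R m n : Type*} [NontriviallyNormedField 𝕜] [NeZero (2 : 𝕜)]
  [NormedCommRing R] [NormedAlgebra 𝕜 R] [Fintype m] [Fintype n] {S : Set 𝕜}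

theorem dotProduct_hasDerivWithinAt_eq_zero {x : 𝕜 → n → R} {x' : n → R} {c : R} {t : 𝕜}
    (hS : UniqueDiffWithinAt 𝕜 S t) (ht : t ∈ S) (hx : HasDerivWithinAt x x' S t)
    (hconst : ∀ s ∈ S, x s ⬝ᵥ x s = c) : x t ⬝ᵥ x' = 0 := by
  have hzero : HasDerivWithinAt (fun s => x s ⬝ᵥ x s) 0 S t :=
    (hasDerivWithinAt_const t S c).congr hconst (hconst t ht)
  have hsum : x' ⬝ᵥ x t + x t ⬝ᵥ x' = 0 :=
    hS.eq_deriv S (hasDerivWithinAt_dotProduct hx hx) hzero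
  rw [dotProduct_comm, ← two_smul 𝕜] at hsum
  exact (smul_eq_zero.1 hsum).resolve_left two_ne_zero

theorem hasDerivWithinAt_singularValue {A : 𝕜 → Matrix m n R} {A' : Matrix m n R} {σ : 𝕜 → R}
    {u : 𝕜 → m → R} {u' : m → R} {v : 𝕜 → n → R} {v' : n → R} {t : 𝕜}
    (hS : UniqueDiffWithinAt 𝕜 S t) (ht : t ∈ S)
    (hA : ∀ i j, HasDerivWithinAt (fun s => A s i j) (A' i j) S t)
    (hu : HasDerivWithinAt u u' S t) (hv : HasDerivWithinAt v v' S t)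
    (h : ∀ s ∈ S, IsSingularTriple (A s) (σ s) (u s) (v s)) :
    HasDerivWithinAt σ (u t ⬝ᵥ A' *ᵥ v t) S t := by
  have hu_orth : u t ⬝ᵥ u' = 0 :=
    dotProduct_hasDerivWithinAt_eq_zero hS ht hu fun s hs => (h s hs).left_unit
  have hv_orth : v t ⬝ᵥ v' = 0 :=
    dotProduct_hasDerivWithinAt_eq_zero hS ht hv fun s hs => (h s hs).right_unit
  have hvectors : u' ⬝ᵥ A t *ᵥ v t + u t ⬝ᵥ A t *ᵥ v' = 0 := by
    rw [(h t ht).dotProduct_mulVec_right, (h t ht).dotProduct_mulVec_left, dotProduct_comm u',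
      hu_orth, hv_orth, mul_zero, add_zero]
  refine ((hasDerivWithinAt_dotProduct_mulVec hA hu hv).congr
    (fun s hs => (h s hs).eq_dotProduct_mulVec) (h t ht).eq_dotProduct_mulVec).congr_deriv ?_
  rw [hvectors, add_zero]

theorem stmt5_general {A A' A'' : 𝕜 → Matrix m n R} {σ σ' σ'' : 𝕜 → R}
    {u u' : 𝕜 → m → R} {v v' : 𝕜 → n → R} (hS : UniqueDiffOn 𝕜 S)
    (hA : ∀ t ∈ S, ∀ i j, HasDerivWithinAt (fun s => A s i j) (A' t i j) S t)
    (hA' : ∀ t ∈ S, ∀ i j, HasDerivWithinAt (fun s => A' s i j) (A'' t i j) S t)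
    (hσ : ∀ t ∈ S, HasDerivWithinAt σ (σ' t) S t)
    (hσ' : ∀ t ∈ S, HasDerivWithinAt σ' (σ'' t) S t)
    (hu : ∀ t ∈ S, HasDerivWithinAt u (u' t) S t)
    (hv : ∀ t ∈ S, HasDerivWithinAt v (v' t) S t)
    (h : ∀ t ∈ S, IsSingularTriple (A t) (σ t) (u t) (v t)) :
    ∀ t ∈ S,
      σ' t = u t ⬝ᵥ A' t *ᵥ v t ∧
      σ'' t = u t ⬝ᵥ A'' t *ᵥ v t +
        ((A' t)ᵀ * (vecMulVec (u' t) (v t) + vecMulVec (u t) (v' t))).trace := by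
  have first : ∀ t ∈ S, σ' t = u t ⬝ᵥ A' t *ᵥ v t := fun t ht =>
    (hS t ht).eq_deriv S (hσ t ht)
      (hasDerivWithinAt_singularValue (hS t ht) ht (hA t ht) (hu t ht) (hv t ht) h)
  refine fun t ht => ⟨first t ht, ?_⟩
  rw [Matrix.mul_add, trace_add, trace_transpose_mul_vecMulVec, trace_transpose_mul_vecMulVec]
  exact (hS t ht).eq_deriv S (hσ' t ht)
    ((hasDerivWithinAt_dotProduct_mulVec (hA' t ht) (hu t ht) (hv t ht)).congr first (first t ht))

end Variation

/-- variation formulas for singular values: first and second derivative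
formulas for a smoothly varying singular value/singular vector triple of a one-parameter
family of matrices. -/
theorem stmt5 {p₁ p₂ : ℕ}
    (A A' A'' : ℝ → Matrix (Fin p₁) (Fin p₂) ℝ)
    (σ σ' σ'' : ℝ → ℝ)
    (u u' : ℝ → Fin p₁ → ℝ) (v v' : ℝ → Fin p₂ → ℝ)
    (hA : ∀ t i j, HasDerivAt (fun s : ℝ => A s i j) (A' t i j) t)
    (hA' : ∀ t i j, HasDerivAt (fun s : ℝ => A' s i j) (A'' t i j) t)
    (hσ : ∀ t, HasDerivAt σ (σ' t) t)
    (hσ' : ∀ t, HasDerivAt σ' (σ'' t) t)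
    (hu : ∀ t i, HasDerivAt (fun s : ℝ => u s i) (u' t i) t)
    (hv : ∀ t i, HasDerivAt (fun s : ℝ => v s i) (v' t i) t)
    (hunorm : ∀ t, ∑ i, (u t i) ^ 2 = 1)
    (hvnorm : ∀ t, ∑ i, (v t i) ^ 2 = 1)
    (hsv₁ : ∀ t, A t *ᵥ v t = σ t • u t)
    (hsv₂ : ∀ t, (A t)ᵀ *ᵥ u t = σ t • v t) :
    ∀ t : ℝ,
      σ' t = ∑ i, u t i * (A' t *ᵥ v t) i ∧
      σ'' t = (∑ i, u t i * (A'' t *ᵥ v t) i) +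
        ∑ i, ∑ j, A' t i j * (u' t i * v t j + u t i * v' t j) := by
  intro t
  have htriple (s : ℝ) : IsSingularTriple (A s) (σ s) (u s) (v s) :=
    ⟨by simpa only [dotProduct, sq] using hunorm s, by simpa only [dotProduct, sq] using hvnorm s,
      hsv₁ s, hsv₂ s⟩
  have hvar := stmt5_general uniqueDiffOn_univ
    (fun s _ i j => (hA s i j).hasDerivWithinAt) (fun s _ i j => (hA' s i j).hasDerivWithinAt)
    (fun s _ => (hσ s).hasDerivWithinAt) (fun s _ => (hσ' s).hasDerivWithinAt)
    (fun s _ => (hasDerivAt_pi.2 (hu s)).hasDerivWithinAt)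
    (fun s _ => (hasDerivAt_pi.2 (hv s)).hasDerivWithinAt) (fun s _ => htriple s) t (Set.mem_univ t)
  rwa [← trInner_eq_trace] at hvar
end

section
/- Let Y*, Y ∈ ℝ^{p×r}_* and X* := Y*Y*ᵀ. If (YYᵀ − X*)Y = 0, then YYᵀ = X*; equivalently, Y = Y*Q for some Q ∈ O(r). Hence [Y*] is the unique Riemannian first-order stationary point of H([Y]) = (1/2)‖YYᵀ − X*‖²_F on the quotient manifold, whose lifted Riemannian gradient is grad_H(Y) = 2(YYᵀ − X*)Y. -/
open Matrix

/-!
Write `A = Y * Yᴴ` and `B = Z * Zᴴ`. Stationarity of `Y` gives `B * A = A * A`, which has the column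
space of `A` because `A` is Hermitian. Hence the column space of `B` contains that of `A`, and the
two coincide because `B.rank ≤ A.rank`. Now `A - B` kills the columns of both `A` and `B`, so its
square vanishes and, being Hermitian, so does `A - B`. Finally, `Y * Yᴴ = Z * Zᴴ` says that
`Zᴴ v ↦ Yᴴ v` is an isometry between the ranges of `Zᴴ` and `Yᴴ`; the unitary matrix comes from
extending it to the whole space.
-/

section ColumnSpace

theorem mul_eq_zero_iff_range_mulVecLin_le_ker {m n k R : Type*} [Fintype n] [Fintype k]
    [CommSemiring R] {A : Matrix m n R} {B : Matrix n k R} :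
    A * B = 0 ↔ LinearMap.range B.mulVecLin ≤ LinearMap.ker A.mulVecLin := by
  classical
  rw [LinearMap.range_le_ker_iff, ← mulVecLin_mul, ← toLin'_apply', LinearEquiv.map_eq_zero_iff]

variable {m n k R : Type*} [Fintype n] [Fintype k] [Field R]

theorem range_mulVecLin_mul_eq_of_rank_le {A : Matrix m n R} {B : Matrix n k R}
    (h : A.rank ≤ (A * B).rank) :
    LinearMap.range (A * B).mulVecLin = LinearMap.range A.mulVecLin := by
  refine Submodule.eq_of_le_of_finrank_le ?_ h
  rw [mulVecLin_mul]
  exact LinearMap.range_comp_le_range _ _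

variable [Fintype m] [PartialOrder R] [StarRing R] [StarOrderedRing R]

theorem eq_of_isHermitian_of_sub_mul_self_eq_zero {A B : Matrix m m R}
    (hA : A.IsHermitian) (hB : B.IsHermitian) (hrank : B.rank ≤ A.rank)
    (h : (A - B) * A = 0) : A = B := by
  have hAA_rank : (A * A).rank = A.rank := by
    simpa only [hA.eq] using rank_conjTranspose_mul_self A
  have hBA : B * A = A * A := by rw [eq_comm, ← sub_eq_zero, ← Matrix.sub_mul, h]
  have hrange : LinearMap.range B.mulVecLin = LinearMap.range A.mulVecLin := by
    rw [← range_mulVecLin_mul_eq_of_rank_le (A := A) hAA_rank.ge, ← hBA]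
    exact (range_mulVecLin_mul_eq_of_rank_le (by rwa [hBA, hAA_rank])).symm
  have hB_zero : (A - B) * B = 0 := by
    rwa [mul_eq_zero_iff_range_mulVecLin_le_ker, hrange,
      ← mul_eq_zero_iff_range_mulVecLin_le_ker]
  have hsq : (A - B)ᴴ * (A - B) = 0 := by
    rw [(hA.sub hB).eq, Matrix.mul_sub, h, hB_zero, sub_zero]
  exact sub_eq_zero.mp (conjTranspose_mul_self_eq_zero.mp hsq)

theorem mul_conjTranspose_self_eq_of_sub_mul_eq_zero {Y : Matrix m n R} {Z : Matrix m k R}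
    (hrank : Z.rank ≤ Y.rank) (h : (Y * Yᴴ - Z * Zᴴ) * Y = 0) : Y * Yᴴ = Z * Zᴴ := by
  apply eq_of_isHermitian_of_sub_mul_self_eq_zero
    (isHermitian_mul_conjTranspose_self Y) (isHermitian_mul_conjTranspose_self Z)
  · simpa only [rank_self_mul_conjTranspose] using hrank
  · rw [← Matrix.mul_assoc, h, Matrix.zero_mul]

end ColumnSpace

section Isometry

theorem exists_linearIsometry_range_of_norm_eq {K V E F : Type*} [DivisionRing K]
    [AddCommGroup V] [Module K V] [SeminormedAddCommGroup E] [Module K E]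
    [NormedAddCommGroup F] [Module K F]
    {f : V →ₗ[K] F} {g : V →ₗ[K] E} (h : ∀ v, ‖f v‖ = ‖g v‖) :
    ∃ L : LinearMap.range g →ₗᵢ[K] F, ∀ v, L (g.rangeRestrict v) = f v := by
  obtain ⟨s, hs⟩ := g.rangeRestrict.exists_rightInverse_of_surjective g.range_rangeRestrict
  have hgs (y : LinearMap.range g) : g (s y) = y := congrArg Subtype.val (LinearMap.congr_fun hs y)
  refine ⟨⟨f ∘ₗ s, fun y => ?_⟩, fun v => ?_⟩
  · rw [LinearMap.comp_apply, h, hgs, Submodule.coe_norm]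
  · change f (s (g.rangeRestrict v)) = f v
    rw [← sub_eq_zero, ← map_sub, ← norm_eq_zero, h, map_sub, hgs, LinearMap.codRestrict_apply,
      sub_self, norm_zero]

variable {𝕜 : Type*} [RCLike 𝕜]

theorem exists_linearIsometry_comp_eq_of_norm_eq {V E : Type*} [AddCommGroup V] [Module 𝕜 V]
    [NormedAddCommGroup E] [InnerProductSpace 𝕜 E] [FiniteDimensional 𝕜 E]
    {f g : V →ₗ[𝕜] E} (h : ∀ v, ‖f v‖ = ‖g v‖) :
    ∃ U : E →ₗᵢ[𝕜] E, ∀ v, U (g v) = f v := by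
  obtain ⟨L, hL⟩ := exists_linearIsometry_range_of_norm_eq h
  exact ⟨L.extend, fun v => (L.extend_apply (g.rangeRestrict v)).trans (hL v)⟩

variable {m n : Type*} [Fintype n]

theorem norm_toLp_mulVec_eq_of_conjTranspose_mul_self_eq {k : Type*} [Fintype m] [Fintype k]
    {X : Matrix n m 𝕜} {W : Matrix k m 𝕜} (h : Xᴴ * X = Wᴴ * W) (v : m → 𝕜) :
    ‖WithLp.toLp 2 (X *ᵥ v)‖ = ‖WithLp.toLp 2 (W *ᵥ v)‖ := by
  simp only [norm_eq_sqrt_re_inner (𝕜 := 𝕜), EuclideanSpace.inner_toLp_toLp, star_mulVec,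
    dotProduct_comm (_ *ᵥ v), ← dotProduct_mulVec, mulVec_mulVec, h]

variable [DecidableEq n]

theorem isometry_toEuclideanCLM_iff_mem_unitaryGroup {U : Matrix n n 𝕜} :
    Isometry (toEuclideanCLM (𝕜 := 𝕜) U) ↔ U ∈ unitaryGroup n 𝕜 := by
  rw [ContinuousLinearMap.isometry_iff_adjoint_comp_self, mem_unitaryGroup_iff',
    ← EmbeddingLike.apply_eq_iff_eq (toEuclideanCLM (n := n) (𝕜 := 𝕜)), map_mul, map_star, map_one]
  rfl

theorem conjTranspose_mul_self_eq_iff_exists_unitaryGroup [Finite m] {X W : Matrix n m 𝕜} :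
    Xᴴ * X = Wᴴ * W ↔ ∃ U ∈ unitaryGroup n 𝕜, X = U * W := by
  cases nonempty_fintype m
  constructor
  · intro h
    let toE := (WithLp.linearEquiv 2 𝕜 (n → 𝕜)).symm.toLinearMap
    obtain ⟨L, hL⟩ := exists_linearIsometry_comp_eq_of_norm_eq
      (f := toE ∘ₗ X.mulVecLin) (g := toE ∘ₗ W.mulVecLin)
      (norm_toLp_mulVec_eq_of_conjTranspose_mul_self_eq h)
    obtain ⟨U, hU⟩ :=
      EquivLike.surjective (toEuclideanCLM (n := n) (𝕜 := 𝕜)) L.toContinuousLinearMap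
    refine ⟨U, isometry_toEuclideanCLM_iff_mem_unitaryGroup.mp (hU ▸ L.isometry), ?_⟩
    refine mulVec_injective (funext fun v => ?_)
    calc X *ᵥ v = (L (WithLp.toLp 2 (W *ᵥ v))).ofLp := congrArg WithLp.ofLp (hL v).symm
      _ = (toEuclideanCLM (𝕜 := 𝕜) U (WithLp.toLp 2 (W *ᵥ v))).ofLp := by rw [hU]; rfl
      _ = (U * W) *ᵥ v := mulVec_mulVec v U W
  · rintro ⟨U, hU, rfl⟩
    rw [conjTranspose_mul, Matrix.mul_assoc, ← Matrix.mul_assoc Uᴴ, ← star_eq_conjTranspose U,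
      mem_unitaryGroup_iff'.mp hU, Matrix.one_mul]

theorem mul_conjTranspose_self_eq_iff_exists_unitaryGroup [Finite m] {Y Z : Matrix m n 𝕜} :
    Y * Yᴴ = Z * Zᴴ ↔ ∃ Q ∈ unitaryGroup n 𝕜, Y = Z * Q := by
  have h := conjTranspose_mul_self_eq_iff_exists_unitaryGroup (X := Yᴴ) (W := Zᴴ)
  rw [conjTranspose_conjTranspose, conjTranspose_conjTranspose] at h
  rw [h]
  constructor <;> rintro ⟨U, hU, hYZ⟩ <;> refine ⟨Uᴴ, Unitary.star_mem hU, ?_⟩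
  · rw [← conjTranspose_conjTranspose Y, hYZ, conjTranspose_mul, conjTranspose_conjTranspose]
  · rw [hYZ, conjTranspose_mul]

end Isometry

open scoped ComplexOrder in
theorem stmt7_general {m n 𝕜 : Type*} [Fintype m] [Fintype n] [DecidableEq n] [RCLike 𝕜]
    (Z Y : Matrix m n 𝕜) (hrank : Z.rank ≤ Y.rank) (h : (Y * Yᴴ - Z * Zᴴ) * Y = 0) :
    Y * Yᴴ = Z * Zᴴ ∧ ∃ Q ∈ unitaryGroup n 𝕜, Y = Z * Q :=
  have hYZ := mul_conjTranspose_self_eq_of_sub_mul_eq_zero hrank h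
  ⟨hYZ, mul_conjTranspose_self_eq_iff_exists_unitaryGroup.mp hYZ⟩

/-- the target class is the unique Riemannian first-order stationary point of
the matrix factorization objective `H`. -/
theorem stmt7 {p r : ℕ} (Ystar Y : Matrix (Fin p) (Fin r) ℝ)
    (hYs : Ystar.rank = r) (hY : Y.rank = r)
    (hFOSP : (Y * Yᵀ - Ystar * Ystarᵀ) * Y = 0) :
    Y * Yᵀ = Ystar * Ystarᵀ ∧
    ∃ Q : Matrix (Fin r) (Fin r) ℝ, IsOrtho Q ∧ Y = Ystar * Q := by
  simpa [mem_unitaryGroup_iff', star_eq_conjTranspose, IsOrtho] using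
    stmt7_general Ystar Y (hYs.trans hY.symm).le (by simpa using hFOSP)
end
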